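/- Let K ∈ ℝ, N ∈ (1,∞) and let a < b be real numbers; if K > 0 assume additionally that b − a ≤ π·√((N−1)/K). Then every MCP(K,N) density h on (a,b) is locally Lipschitz on (a,b): every point of (a,b) has a neighborhood on which h is Lipschitz. -/

import Mathlib

open Real MeasureTheory ENNReal

/-- The finite part of the distortion coefficient `σ_{K,N}^{(t)}(θ)`. -/
noncomputable def sigmaR (K N t θ : ℝ) : ℝ :=
  if 0 < K * θ ^ 2 then
    Real.sin (t * θ * Real.sqrt (K / N)) / Real.sin (θ * Real.sqrt (K / N))
  else if K * θ ^ 2 = 0 ∨ N = 0 then t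
  else Real.sinh (t * θ * Real.sqrt (-K / N)) / Real.sinh (θ * Real.sqrt (-K / N))

/-- The distortion coefficient `σ_{K,N}^{(t)}(θ)`, with value `+∞` when `K·θ² ≥ N·π²`. -/
noncomputable def sigmaE (K N t θ : ℝ) : ℝ≥0∞ :=
  if N * Real.pi ^ 2 ≤ K * θ ^ 2 then ⊤ else ENNReal.ofReal (sigmaR K N t θ)

/-- `h` is an `MCP(K,N)` density on the interval `I ⊆ ℝ`:  `h` is nonnegative on `I` and
`h(t·x₁ + (1−t)·x₀) ≥ (σ_{K,N−1}^{(1−t)}(|x₁ − x₀|))^{N−1} · h(x₀)` for all `x₀, x₁ ∈ I`,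
`t ∈ [0,1]`.  The inequality is formulated in `ℝ≥0∞` so that an infinite coefficient forces
`h(x₀) = 0`. -/
def IsMCPDensity (K N : ℝ) (I : Set ℝ) (h : ℝ → ℝ) : Prop :=
  (∀ x ∈ I, 0 ≤ h x) ∧
  ∀ x₀ ∈ I, ∀ x₁ ∈ I, ∀ t ∈ Set.Icc (0:ℝ) 1,
    sigmaE K (N - 1) (1 - t) |x₁ - x₀| ^ (N - 1) * ENNReal.ofReal (h x₀)
      ≤ ENNReal.ofReal (h (t * x₁ + (1 - t) * x₀))

/-- The function `s_κ`. -/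
noncomputable def sk (κ θ : ℝ) : ℝ :=
  if 0 < κ then Real.sin (Real.sqrt κ * θ) / Real.sqrt κ
  else if κ = 0 then θ
  else Real.sinh (Real.sqrt (-κ) * θ) / Real.sqrt (-κ)

/-- The derivative `s′_κ` of `s_κ`. -/
noncomputable def sk' (κ θ : ℝ) : ℝ :=
  if 0 < κ then Real.cos (Real.sqrt κ * θ)
  else if κ = 0 then 1
  else Real.cosh (Real.sqrt (-κ) * θ)

/-!
Put `κ = K / (N - 1)`, fix `x` in the interior of `I`, and choose `p < x < q` in `I` so close to `x`
that `s_κ > 0` on `(0, q - p]`. The coefficient `σ_{K,N-1}` is a quotient of values of `s_κ`, so the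
MCP inequality with endpoint `q`, respectively `p`, says that `h / s_κ(q - ·) ^ (N - 1)` is
increasing and `h / s_κ(· - p) ^ (N - 1)` is decreasing between `p` and `q`. Monotonicity bounds
both quotients near `x`, and both denominators are `C¹` and positive there, so the first quotient
bounds the decrease of `h` linearly and the second its increase.
-/

section LocallyLipschitz

open Set Topology NNReal

theorem exists_ball_subset_and_lipschitzOnWith {α β : Type*} [PseudoMetricSpace α]
    [PseudoEMetricSpace β] {f : α → β} {s : Set α} (hs : IsOpen s) (hf : LocallyLipschitzOn s f)
    {x : α} (hx : x ∈ s) :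
    ∃ r > (0 : ℝ), Metric.ball x r ⊆ s ∧ ∃ L : ℝ≥0, LipschitzOnWith L f (Metric.ball x r) := by
  obtain ⟨L, t, ht, hL⟩ := hf hx
  rw [hs.nhdsWithin_eq hx] at ht
  obtain ⟨r, hr, hball⟩ := Metric.mem_nhds_iff.1 (Filter.inter_mem (hs.mem_nhds hx) ht)
  exact ⟨r, hr, hball.trans inter_subset_left, L, hL.mono (hball.trans inter_subset_right)⟩

theorem exists_eventually_abs_le_of_monotoneOn {α : Type*} [TopologicalSpace α] [LinearOrder α]
    [OrderTopology α] {f : α → ℝ} {s : Set α} {x : α} (hs : s ∈ 𝓝 x) (hf : MonotoneOn f s) :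
    ∃ M : ℝ≥0, ∀ᶠ y in 𝓝 x, |f y| ≤ M := by
  obtain ⟨b, c, hx, hbc, hsub⟩ := exists_Icc_mem_subset_of_mem_nhds hs
  have hle : b ≤ c := hx.1.trans hx.2
  refine ⟨max ‖f b‖₊ ‖f c‖₊, Filter.mem_of_superset hbc fun y hy => ?_⟩
  exact abs_le_max_abs_abs (hf (hsub (left_mem_Icc.2 hle)) (hsub hy) hy.1)
    (hf (hsub hy) (hsub (right_mem_Icc.2 hle)) hy.2)

variable {α : Type*} [PseudoMetricSpace α] [LinearOrder α] [OrderTopology α]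
  {h u v : α → ℝ} {s : Set α} {x : α}

theorem exists_forall_le_add_mul_dist_of_monotoneOn_div
    (hu : ∃ L, ∃ t ∈ 𝓝 x, LipschitzOnWith L u t) (hux : 0 < u x)
    (hs : s ∈ 𝓝 x) (hmono : MonotoneOn (fun y => h y / u y) s) :
    ∃ C : ℝ≥0, ∃ t ∈ 𝓝 x, ∀ y ∈ t, ∀ z ∈ t, y ≤ z → h y ≤ h z + C * dist y z := by
  obtain ⟨L, t, ht, hL⟩ := hu
  obtain ⟨M, hM⟩ := exists_eventually_abs_le_of_monotoneOn hs hmono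
  have hpos : ∀ᶠ y in 𝓝 x, 0 < u y :=
    (hL.continuousOn.continuousAt ht).eventually (lt_mem_nhds hux)
  refine ⟨L * M, _, Filter.inter_mem (Filter.inter_mem hs ht) (hM.and hpos), ?_⟩
  rintro y ⟨⟨hys, hyt⟩, hyM, hy0⟩ z ⟨⟨hzs, hzt⟩, -, hz0⟩ hyz
  have hquot : u z * (h y / u y) ≤ h z := by
    simpa only [mul_div_cancel₀ _ hz0.ne'] using
      mul_le_mul_of_nonneg_left (hmono hys hzs hyz) hz0.le
  have herror : (u y - u z) * (h y / u y) ≤ L * dist y z * M :=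
    calc (u y - u z) * (h y / u y)
      _ ≤ |u y - u z| * |h y / u y| := by rw [← abs_mul]; exact le_abs_self _
      _ ≤ L * dist y z * M :=
        mul_le_mul (hL.dist_le_mul y hyt z hzt) hyM (abs_nonneg _) (by positivity)
  calc h y
    _ = u z * (h y / u y) + (u y - u z) * (h y / u y) := by field_simp; ring
    _ ≤ h z + L * dist y z * M := add_le_add hquot herror
    _ = h z + (L * M : ℝ≥0) * dist y z := by push_cast; ring

theorem exists_lipschitzOnWith_of_monotoneOn_div_of_antitoneOn_div
    (hu : ∃ L, ∃ t ∈ 𝓝 x, LipschitzOnWith L u t) (hux : 0 < u x)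
    (hv : ∃ L, ∃ t ∈ 𝓝 x, LipschitzOnWith L v t) (hvx : 0 < v x) (hs : s ∈ 𝓝 x)
    (hmono : MonotoneOn (fun y => h y / u y) s) (hanti : AntitoneOn (fun y => h y / v y) s) :
    ∃ L, ∃ t ∈ 𝓝 x, LipschitzOnWith L h t := by
  have hmono_neg : MonotoneOn (fun y => -h y / v y) s := by
    simpa only [neg_div] using hanti.neg
  obtain ⟨C, t, ht, hC⟩ := exists_forall_le_add_mul_dist_of_monotoneOn_div hu hux hs hmono
  obtain ⟨D, w, hw, hD⟩ := exists_forall_le_add_mul_dist_of_monotoneOn_div hv hvx hs hmono_neg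
  refine ⟨max C D, t ∩ w, Filter.inter_mem ht hw, LipschitzOnWith.of_le_add_mul _ ?_⟩
  rintro y ⟨hyt, hyw⟩ z ⟨hzt, hzw⟩
  rcases le_total y z with hyz | hzy
  · calc h y
      _ ≤ h z + C * dist y z := hC y hyt z hzt hyz
      _ ≤ h z + (max C D : ℝ≥0) * dist y z := by gcongr; exact le_max_left C D
  · calc h y
      _ ≤ h z + D * dist y z := by
        rw [dist_comm]
        linarith [hD z hzw y hyw hzy]
      _ ≤ h z + (max C D : ℝ≥0) * dist y z := by gcongr; exact le_max_right C D

end LocallyLipschitz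

section Sk

variable {κ K N t θ : ℝ}

theorem contDiff_sk (κ : ℝ) {n : WithTop ℕ∞} : ContDiff ℝ n (sk κ) := by
  unfold sk
  split_ifs <;> fun_prop

-- The bound `θ < π / √κ` in a form that makes sense for every sign of `κ`.
theorem sk_pos (hθ : 0 < θ) (hκθ : κ * θ ^ 2 < π ^ 2) : 0 < sk κ θ := by
  unfold sk
  split_ifs with hpos hzero
  · have hlt : √κ * θ < π := by
      refine lt_of_pow_lt_pow_left₀ 2 pi_pos.le ?_
      rwa [mul_pow, sq_sqrt hpos.le]
    have hsqrt : 0 < √κ := sqrt_pos.2 hpos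
    exact div_pos (sin_pos_of_pos_of_lt_pi (mul_pos hsqrt hθ) hlt) hsqrt
  · exact hθ
  · have hsqrt : 0 < √(-κ) := sqrt_pos.2 (by grind)
    exact div_pos (sinh_pos_iff.2 (mul_pos hsqrt hθ)) hsqrt

theorem sigmaR_eq_sk_div_sk (hN : 0 < N) (hθ : θ ≠ 0) :
    sigmaR K N t θ = sk (K / N) (t * θ) / sk (K / N) θ := by
  have hθ2 : 0 < θ ^ 2 := by positivity
  rcases lt_trichotomy K 0 with hK | rfl | hK
  · have hKN : K / N < 0 := div_neg_of_neg_of_pos hK hN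
    have hsqrt : √(-(K / N)) ≠ 0 := (sqrt_pos.2 (neg_pos.2 hKN)).ne'
    have hKθ : K * θ ^ 2 < 0 := mul_neg_of_neg_of_pos hK hθ2
    simp only [sigmaR, sk, hKθ.not_gt, hKθ.ne, hN.ne', hKN.not_gt, hKN.ne, or_self, if_false,
      neg_div, div_div_div_cancel_right₀ hsqrt, mul_comm √(-(K / N))]
  · simp [sigmaR, sk, hθ]
  · have hKN : 0 < K / N := div_pos hK hN
    have hsqrt : √(K / N) ≠ 0 := (sqrt_pos.2 hKN).ne'
    simp only [sigmaR, sk, mul_pos hK hθ2, hKN, if_true, div_div_div_cancel_right₀ hsqrt,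
      mul_comm √(K / N)]

theorem sigmaE_eq_ofReal_sk_div_sk (hN : 0 < N) (hθ : θ ≠ 0) (hKθ : K / N * θ ^ 2 < π ^ 2) :
    sigmaE K N t θ = ENNReal.ofReal (sk (K / N) (t * θ) / sk (K / N) θ) := by
  have hfinite : ¬N * π ^ 2 ≤ K * θ ^ 2 := by
    rwa [not_le, ← div_lt_iff₀' hN, mul_div_right_comm]
  rw [sigmaE, if_neg hfinite, sigmaR_eq_sk_div_sk hN hθ]

theorem mul_sq_lt_of_le {C d : ℝ} (hC : 0 < C) (hd : κ * d ^ 2 < C) (hθ : 0 ≤ θ) (hθd : θ ≤ d) :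
    κ * θ ^ 2 < C := by
  rcases le_total κ 0 with hκ | hκ
  · exact (mul_nonpos_of_nonpos_of_nonneg hκ (sq_nonneg θ)).trans_lt hC
  · exact lt_of_le_of_lt (by gcongr) hd

open Set Topology in
theorem exists_Icc_subset_and_mul_sq_lt {I : Set ℝ} {x C : ℝ} (hI : I ∈ 𝓝 x) (κ : ℝ)
    (hC : 0 < C) : ∃ p q, p < x ∧ x < q ∧ Icc p q ⊆ I ∧ κ * (q - p) ^ 2 < C := by
  have hshort : ∀ᶠ δ in 𝓝 (0 : ℝ), κ * (2 * δ) ^ 2 < C :=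
    ContinuousAt.eventually_lt (by fun_prop) continuousAt_const (by simpa using hC)
  obtain ⟨δ, hδ0, hδI, hδ⟩ := ((eventually_closedBall_subset hI).and hshort).exists_gt
  refine ⟨x - δ, x + δ, sub_lt_self x hδ0, lt_add_of_pos_right x hδ0,
    Real.closedBall_eq_Icc ▸ hδI, ?_⟩
  rwa [show x + δ - (x - δ) = 2 * δ by ring]

end Sk

namespace IsMCPDensity

open Set Topology

variable {K N p q : ℝ} {I : Set ℝ} {h : ℝ → ℝ}

theorem div_sk_rpow_le (hh : IsMCPDensity K N I h) (hN : 1 < N) {x₀ x₁ y : ℝ} (h₀ : x₀ ∈ I)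
    (h₁ : x₁ ∈ I) (hy : y ∈ I) (hseg : y ∈ segment ℝ x₀ x₁) (hne : y ≠ x₁)
    (hlen : K / (N - 1) * |x₁ - x₀| ^ 2 < π ^ 2) :
    h x₀ / sk (K / (N - 1)) |x₁ - x₀| ^ (N - 1) ≤ h y / sk (K / (N - 1)) |x₁ - y| ^ (N - 1) := by
  obtain ⟨c, t, hc, ht, hct, rfl⟩ := hseg
  obtain rfl : c = 1 - t := by linarith
  simp only [smul_eq_mul, add_comm ((1 - t) * x₀)] at hy hne ⊢
  have hdist : (1 - t) * |x₁ - x₀| = |x₁ - (t * x₁ + (1 - t) * x₀)| := by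
    rw [← abs_of_nonneg hc, ← abs_mul, abs_of_nonneg hc]
    ring_nf
  have hdist_pos : 0 < (1 - t) * |x₁ - x₀| := hdist ▸ abs_pos.2 (sub_ne_zero.2 hne.symm)
  have hlen_pos : 0 < |x₁ - x₀| := pos_of_mul_pos_right hdist_pos hc
  have hs₀ : 0 < sk (K / (N - 1)) |x₁ - x₀| := sk_pos hlen_pos hlen
  have hs : 0 < sk (K / (N - 1)) ((1 - t) * |x₁ - x₀|) :=
    sk_pos hdist_pos (mul_sq_lt_of_le (by positivity) hlen hdist_pos.le
      (mul_le_of_le_one_left hlen_pos.le (by linarith)))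
  have hmcp := hh.2 x₀ h₀ x₁ h₁ t ⟨ht, by linarith⟩
  rw [sigmaE_eq_ofReal_sk_div_sk (sub_pos.2 hN) hlen_pos.ne' hlen,
    ENNReal.ofReal_rpow_of_pos (div_pos hs hs₀), ← ENNReal.ofReal_mul (by positivity),
    ENNReal.ofReal_le_ofReal_iff (hh.1 _ hy), div_rpow hs.le hs₀.le] at hmcp
  rw [← hdist, le_div_iff₀ (by positivity)]
  rwa [div_mul_eq_mul_div, mul_comm, ← div_mul_eq_mul_div]

theorem monotoneOn_div_sk_rpow (hh : IsMCPDensity K N I h) (hN : 1 < N) (hI : Icc p q ⊆ I)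
    (hlen : K / (N - 1) * (q - p) ^ 2 < π ^ 2) :
    MonotoneOn (fun y => h y / sk (K / (N - 1)) (q - y) ^ (N - 1)) (Ico p q) := by
  intro y hy z hz hyz
  have hyq : 0 < q - y := sub_pos.2 hy.2
  have hzq : 0 < q - z := sub_pos.2 hz.2
  have hlen' : K / (N - 1) * (q - y) ^ 2 < π ^ 2 :=
    mul_sq_lt_of_le (by positivity) hlen hyq.le (by linarith [hy.1])
  have hq : q ∈ I := hI ⟨hy.1.trans hy.2.le, le_rfl⟩
  have hseg : z ∈ segment ℝ y q := Icc_subset_segment ⟨hyz, hz.2.le⟩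
  simpa only [abs_of_pos hyq, abs_of_pos hzq] using
    hh.div_sk_rpow_le hN (hI (Ico_subset_Icc_self hy)) hq (hI (Ico_subset_Icc_self hz)) hseg
      hz.2.ne (by rwa [sq_abs])

theorem antitoneOn_div_sk_rpow (hh : IsMCPDensity K N I h) (hN : 1 < N) (hI : Icc p q ⊆ I)
    (hlen : K / (N - 1) * (q - p) ^ 2 < π ^ 2) :
    AntitoneOn (fun y => h y / sk (K / (N - 1)) (y - p) ^ (N - 1)) (Ioc p q) := by
  intro y hy z hz hyz
  have hpy : 0 < y - p := sub_pos.2 hy.1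
  have hpz : 0 < z - p := sub_pos.2 hz.1
  have hlen' : K / (N - 1) * (z - p) ^ 2 < π ^ 2 :=
    mul_sq_lt_of_le (by positivity) hlen hpz.le (by linarith [hz.2])
  have hp : p ∈ I := hI ⟨le_rfl, hy.1.le.trans hy.2⟩
  have hseg : y ∈ segment ℝ z p := segment_symm ℝ p z ▸ Icc_subset_segment ⟨hy.1.le, hyz⟩
  simpa only [abs_sub_comm p, abs_of_pos hpy, abs_of_pos hpz] using
    hh.div_sk_rpow_le hN (hI (Ioc_subset_Icc_self hz)) hp (hI (Ioc_subset_Icc_self hy)) hseg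
      hy.1.ne' (by rwa [sq_abs, sub_sq_comm])

end IsMCPDensity

open Set Topology in
theorem mcp_density_locallyLipschitz_general {K N : ℝ} (hN : 1 < N) {I : Set ℝ} {h : ℝ → ℝ}
    (hh : IsMCPDensity K N I h) : LocallyLipschitzOn (interior I) h := by
  intro x hx
  obtain ⟨p, q, hpx, hxq, hpqI, hlen⟩ := exists_Icc_subset_and_mul_sq_lt
    (mem_interior_iff_mem_nhds.1 hx) (K / (N - 1)) (sq_pos_of_pos pi_pos)
  have hs {θ : ℝ} (hθ : 0 < θ) (hθpq : θ ≤ q - p) : 0 < sk (K / (N - 1)) θ :=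
    sk_pos hθ (mul_sq_lt_of_le (by positivity) hlen hθ.le hθpq)
  have hsq : 0 < sk (K / (N - 1)) (q - x) := hs (by linarith) (by linarith)
  have hsp : 0 < sk (K / (N - 1)) (x - p) := hs (by linarith) (by linarith)
  have hu : ContDiffAt ℝ 1 (fun y => sk (K / (N - 1)) (q - y) ^ (N - 1)) x :=
    ((contDiff_sk _).comp (contDiff_const.sub contDiff_id)).contDiffAt.rpow_const_of_ne hsq.ne'
  have hv : ContDiffAt ℝ 1 (fun y => sk (K / (N - 1)) (y - p) ^ (N - 1)) x :=
    ((contDiff_sk _).comp (contDiff_id.sub contDiff_const)).contDiffAt.rpow_const_of_ne hsp.ne'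
  obtain ⟨L, t, ht, hL⟩ := exists_lipschitzOnWith_of_monotoneOn_div_of_antitoneOn_div
    hu.exists_lipschitzOnWith (by positivity) hv.exists_lipschitzOnWith (by positivity)
    (Ioo_mem_nhds hpx hxq)
    ((hh.monotoneOn_div_sk_rpow hN hpqI hlen).mono Ioo_subset_Ico_self)
    ((hh.antitoneOn_div_sk_rpow hN hpqI hlen).mono Ioo_subset_Ioc_self)
  exact ⟨L, t, mem_nhdsWithin_of_mem_nhds ht, hL⟩

theorem mcp_density_locallyLipschitz
    (K N a b : ℝ) (hN : 1 < N) (hab : a < b)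
    (hK : 0 < K → b - a ≤ Real.pi * Real.sqrt ((N - 1) / K))
    (h : ℝ → ℝ) (hh : IsMCPDensity K N (Set.Ioo a b) h) :
    ∀ x ∈ Set.Ioo a b, ∃ r > (0:ℝ), Metric.ball x r ⊆ Set.Ioo a b ∧
      ∃ L : NNReal, LipschitzOnWith L h (Metric.ball x r) := by
  have hloc := interior_Ioo (a := a) (b := b) ▸ mcp_density_locallyLipschitz_general hN hh
  exact fun x hx => exists_ball_subset_and_lipschitzOnWith isOpen_Ioo hloc hx
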